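/- Let q be a prime and G a cyclic group of order q. Then for every s with Re s > 1, Z_P(s) = ζ_{P_1}(s)^q · ζ_{P_q}(qs); in particular all the infinite products involved converge. -/

import Mathlib

lemma aux_multipliable {ι : Type*} (x : ι → ℂ) (hx : Summable fun i => ‖x i‖) :
    Multipliable fun i => (1 - x i)⁻¹ := by
  have h : Summable fun i => ‖(1 - x i)⁻¹ - 1‖ := by
    refine Summable.of_norm_bounded_eventually (hx.mul_left 2) ?_
    have h0 := hx.tendsto_cofinite_zero
    filter_upwards [h0.eventually_le_const (show (0 : ℝ) < 1 / 2 by norm_num)] with i hi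
    have h1 : 1 / 2 ≤ ‖1 - x i‖ := by
      have := norm_sub_norm_le (1 : ℂ) (x i)
      rw [norm_one] at this
      linarith
    have hne : 1 - x i ≠ 0 := by
      intro h
      rw [h, norm_zero] at h1
      norm_num at h1
    have h2 : (1 - x i)⁻¹ - 1 = x i * (1 - x i)⁻¹ := by
      field_simp
      ring
    rw [norm_norm, h2, norm_mul, norm_inv, mul_comm]
    have h3 : ‖1 - x i‖⁻¹ ≤ 2 := by
      rw [inv_le_comm₀ (by linarith) (by norm_num)]
      linarith
    exact mul_le_mul_of_nonneg_right h3 (norm_nonneg _)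
  simpa using multipliable_one_add_of_summable h

lemma aux_bij {G : Type*} [Group G] [Fintype G] (q : ℕ) (hq : q.Prime)
    (hcard : Fintype.card G = q) (g : G) (hg : g ≠ 1) :
    Set.BijOn (fun ρ : G →* ℂˣ => (ρ g : ℂ)) Set.univ
      (Polynomial.nthRootsFinset q (1 : ℂ) : Set ℂ) := by
  haveI : Fact q.Prime := ⟨hq⟩
  have hc : Nat.card G = q := by rw [Nat.card_eq_fintype_card, hcard]
  have hz : ∀ x, x ∈ Subgroup.zpowers g := fun x => mem_zpowers_of_prime_card hc hg
  have hgq : g ^ q = 1 := by rw [← hcard]; exact pow_card_eq_one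
  have hord : orderOf g = q := orderOf_eq_prime hgq hg
  refine ⟨fun ρ _ => ?_, fun ρ _ ρ' _ h => ?_, fun z hz' => ?_⟩
  · simp only [Finset.mem_coe, Polynomial.mem_nthRootsFinset hq.pos]
    rw [← Units.val_pow_eq_pow_val, ← map_pow, hgq]
    simp
  · have h' : ρ g = ρ' g := Units.ext h
    ext x
    obtain ⟨k, rfl⟩ := Subgroup.mem_zpowers_iff.mp (hz x)
    rw [map_zpow, map_zpow, h']
  · rw [Finset.mem_coe, Polynomial.mem_nthRootsFinset hq.pos] at hz'
    let u : ℂˣ := Units.ofPowEqOne z q hz' hq.ne_zero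
    have hu : orderOf u ∣ orderOf g := by
      rw [hord]
      exact orderOf_dvd_of_pow_eq_one (Units.pow_ofPowEqOne hz' hq.ne_zero)
    refine ⟨monoidHomOfForallMemZpowers hz hu, trivial, ?_⟩
    simp [monoidHomOfForallMemZpowers_apply_gen, u]

lemma aux_card {G : Type*} [Group G] [Fintype G] (q : ℕ) (hq : q.Prime)
    (hcard : Fintype.card G = q) : Nat.card (G →* ℂˣ) = q := by
  have : Nontrivial G := Fintype.one_lt_card_iff_nontrivial.mp (hcard ▸ hq.one_lt)
  obtain ⟨g, hg⟩ := exists_ne (1 : G)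
  have h := aux_bij q hq hcard g hg
  have h2 := Nat.card_congr h.equiv
  rw [Nat.card_congr (Equiv.Set.univ _)] at h2
  rw [h2]
  simpa using (Complex.isPrimitiveRoot_exp q hq.ne_zero).card_nthRootsFinset


/-- Let `q` be a prime, `G` a cyclic group of order `q`, `φ : P → G`.  With
`ζ_Q(s) = ∏_{p ∈ Q} (1 - N(p)^(-s))⁻¹`, `L_P(s,ρ) = ∏_{p ∈ P} (1 - ρ(φ(p)) N(p)^(-s))⁻¹`
and `Z_P(s) = ∏_ρ L_P(s,ρ)` (the product over all characters `ρ : G → ℂˣ`), one has for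
`Re s > 1` that `Z_P(s) = ζ_{P₁}(s)^q · ζ_{P_q}(qs)`, all products involved converging. -/
theorem ZP_eq_zetaP1_pow_mul_zetaPq {P : Type*} [Countable P] [Infinite P] (N : P → ℝ)
    (hN : ∀ p, 1 < N p)
    (hsum : ∀ σ : ℝ, 1 < σ → Summable fun p => (N p) ^ (-σ))
    {G : Type*} [Group G] [Fintype G] (q : ℕ) (hq : q.Prime) (hcard : Fintype.card G = q)
    (φ : P → G) (s : ℂ) (hs : 1 < s.re) :
    (∀ ρ : G →* ℂˣ, Multipliable fun p : P => (1 - (ρ (φ p) : ℂ) * (N p : ℂ) ^ (-s))⁻¹) ∧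
    Multipliable (fun p : {p : P // φ p = 1} => (1 - (N p.1 : ℂ) ^ (-s))⁻¹) ∧
    Multipliable (fun p : {p : P // φ p ≠ 1} => (1 - (N p.1 : ℂ) ^ (-((q : ℂ) * s)))⁻¹) ∧
    (∏' ρ : G →* ℂˣ, ∏' p : P, (1 - (ρ (φ p) : ℂ) * (N p : ℂ) ^ (-s))⁻¹)
      = (∏' p : {p : P // φ p = 1}, (1 - (N p.1 : ℂ) ^ (-s))⁻¹) ^ q
        * ∏' p : {p : P // φ p ≠ 1}, (1 - (N p.1 : ℂ) ^ (-((q : ℂ) * s)))⁻¹ := by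
  have hnorm : ∀ (t : ℂ) (p : P), ‖(N p : ℂ) ^ (-t)‖ = N p ^ (-t.re) := fun t p => by
    rw [Complex.norm_cpow_eq_rpow_re_of_pos (by linarith [hN p]), Complex.neg_re]
  have hS : ∀ t : ℂ, 1 < t.re → Summable fun p => ‖(N p : ℂ) ^ (-t)‖ := fun t ht => by
    simpa only [hnorm] using hsum t.re ht
  have hqs : 1 < ((q : ℂ) * s).re := by
    have h2 : (1 : ℝ) ≤ q := by exact_mod_cast hq.one_le
    simp only [Complex.mul_re, Complex.natCast_re, Complex.natCast_im, zero_mul, sub_zero]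
    nlinarith
  have hρ : ∀ (ρ : G →* ℂˣ) (g : G), ‖(ρ g : ℂ)‖ = 1 := fun ρ g => by
    refine Complex.norm_eq_one_of_pow_eq_one (n := q) ?_ hq.ne_zero
    rw [← Units.val_pow_eq_pow_val, ← map_pow, ← hcard, pow_card_eq_one]
    simp
  have hL : ∀ ρ : G →* ℂˣ,
      Multipliable fun p : P => (1 - (ρ (φ p) : ℂ) * (N p : ℂ) ^ (-s))⁻¹ := fun ρ => by
    refine aux_multipliable _ ?_
    simpa only [norm_mul, hρ, one_mul] using hS s hs
  have h1 : Multipliable (fun p : {p : P // φ p = 1} => (1 - (N p.1 : ℂ) ^ (-s))⁻¹) :=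
    aux_multipliable _ ((hS s hs).comp_injective Subtype.val_injective)
  have h2 : Multipliable
      (fun p : {p : P // φ p ≠ 1} => (1 - (N p.1 : ℂ) ^ (-((q : ℂ) * s)))⁻¹) :=
    aux_multipliable _ ((hS _ hqs).comp_injective Subtype.val_injective)
  refine ⟨hL, h1, h2, ?_⟩
  have hcc := aux_card q hq hcard
  haveI : Finite (G →* ℂˣ) := Nat.finite_of_card_ne_zero (hcc ▸ hq.ne_zero)
  letI : Fintype (G →* ℂˣ) := Fintype.ofFinite _
  rw [Nat.card_eq_fintype_card] at hcc
  rw [tprod_fintype, ← Multipliable.tprod_finsetProd (fun ρ _ => hL ρ)]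
  set F : P → ℂ := fun p => ∏ ρ : G →* ℂˣ, (1 - (ρ (φ p) : ℂ) * (N p : ℂ) ^ (-s))⁻¹ with hF
  have hF1 : ∀ p, φ p = 1 → F p = ((1 - (N p : ℂ) ^ (-s))⁻¹) ^ q := fun p hp => by
    simp [hF, hp, hcc]
  have hFq : ∀ p, φ p ≠ 1 → F p = (1 - (N p : ℂ) ^ (-((q : ℂ) * s)))⁻¹ := fun p hp => by
    have hb := aux_bij q hq hcard (φ p) hp
    have e := (Complex.isPrimitiveRoot_exp q hq.ne_zero).pow_sub_pow_eq_prod_sub_mul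
      1 ((N p : ℂ) ^ (-s)) hq.pos
    have e2 : ((N p : ℂ) ^ (-s)) ^ q = (N p : ℂ) ^ (-((q : ℂ) * s)) := by
      rw [← Complex.cpow_nat_mul]
      congr 1
      ring
    rw [hF]
    simp only [Finset.prod_inv_distrib]
    rw [← e2, ← one_pow q, e]
    congr 1
    refine Finset.prod_nbij (fun ρ : G →* ℂˣ => (ρ (φ p) : ℂ)) ?_ ?_ ?_ ?_
    · exact fun ρ _ => hb.mapsTo (Set.mem_univ ρ)
    · simpa using hb.injOn
    · simpa using hb.surjOn
    · intros
      simp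
  have k1 : (fun p : {p : P // φ p = 1} => F p.1) =
      fun p => ((1 - (N p.1 : ℂ) ^ (-s))⁻¹) ^ q := funext fun p => hF1 p.1 p.2
  have k2 : (fun p : {p : P // φ p ≠ 1} => F p.1) =
      fun p => (1 - (N p.1 : ℂ) ^ (-((q : ℂ) * s)))⁻¹ := funext fun p => hFq p.1 p.2
  rw [← h1.tprod_pow, ← k1, ← k2]
  have m1 : Multipliable (fun p : {p : P // φ p = 1} => F p.1) := k1 ▸ h1.pow q
  have m2 : Multipliable (fun p : {p : P // φ p ≠ 1} => F p.1) := k2 ▸ h2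
  exact (Multipliable.tprod_mul_tprod_compl (f := F) (s := {p : P | φ p = 1}) m1 m2).symm
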